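/- Let x₀ ∈ ℝ, let α ∈ (0,1] with β = 1 − α, and let ā ∈ (0,1] (the accumulated product ᾱ_{t−1}), and set ā' = α · ā (the accumulated product ᾱ_t). Then the convolution of the pushforward of the Gaussian measure gaussianReal (√ā · x₀) (1 − ā) under the map y ↦ √α · y with the Gaussian measure gaussianReal 0 β equals gaussianReal (√ā' · x₀) (1 − ā'). In symbols: ((gaussianReal (√ā·x₀) ⟨1−ā⟩).map (fun y => √α * y)) ∗ gaussianReal 0 ⟨β⟩ = gaussianReal (√ā'·x₀) ⟨1−ā'⟩, where variances are the indicated nonnegative reals. -/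

import Mathlib

open MeasureTheory ProbabilityTheory

theorem gaussianReal_map_sqrt_mul {a : ℝ} (ha : 0 ≤ a) (m : ℝ) (v : NNReal) :
    (gaussianReal m v).map (fun y => Real.sqrt a * y)
      = gaussianReal (Real.sqrt a * m) (NNReal.mk a ha * v) := by
  simp only [gaussianReal_map_const_mul, Real.sq_sqrt ha]

theorem gaussianReal_map_sqrt_mul_conv_gaussianReal {a : ℝ} (ha : 0 ≤ a) (m₁ m₂ : ℝ)
    (v₁ v₂ : NNReal) :
    Measure.conv ((gaussianReal m₁ v₁).map (fun y => Real.sqrt a * y)) (gaussianReal m₂ v₂)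
      = gaussianReal (Real.sqrt a * m₁ + m₂) (NNReal.mk a ha * v₁ + v₂) := by
  rw [gaussianReal_map_sqrt_mul ha, gaussianReal_conv_gaussianReal]

/-- One-step induction behind Eq. (2) of the paper: scaling a Gaussian
`N(√ā x₀, 1−ā)` by `√α` and adding independent `N(0, β)` noise with
`β = 1 − α` gives `N(√ā' x₀, 1−ā')` where `ā' = α ā`.  Here `Measure.conv`
is the additive convolution of measures (the law of a sum of independent
random variables). -/
theorem ddpm_one_step_gaussian (x₀ α abar β abar' : ℝ)
    (hα : α ∈ Set.Ioc (0 : ℝ) 1) (habar : abar ∈ Set.Ioc (0 : ℝ) 1)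
    (hβ : β = 1 - α) (habar' : abar' = α * abar) :
    Measure.conv
        ((gaussianReal (Real.sqrt abar * x₀)
            ⟨1 - abar, by linarith [habar.2]⟩).map (fun y => Real.sqrt α * y))
        (gaussianReal 0 ⟨β, by rw [hβ]; linarith [hα.2]⟩)
      = gaussianReal (Real.sqrt abar' * x₀)
          ⟨1 - abar', by rw [habar']; nlinarith [hα.1, hα.2, habar.1, habar.2]⟩ := by
  have mean_eq : Real.sqrt α * (Real.sqrt abar * x₀) + 0 = Real.sqrt abar' * x₀ := by
    rw [habar', Real.sqrt_mul hα.1.le, add_zero, mul_assoc]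
  have variance_eq : α * (1 - abar) + β = 1 - abar' := by
    rw [hβ, habar']
    ring
  exact (gaussianReal_map_sqrt_mul_conv_gaussianReal hα.1.le ..).trans
    (congrArg₂ gaussianReal mean_eq (NNReal.eq variance_eq))
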